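/- (Desequentialization) For every named GS4 derivation P with conclusion ⊢Γ, the branch-labeled axiom graph ⟨⟨P⟩⟩ is total with respect to ⊢Γ. -/

import Mathlib

open scoped Classical

noncomputable section

namespace GS4

/-- Named classical propositional formulas over atoms `α`, with names in `ℕ`. -/
inductive NForm (α : Type) : Type
  | atom : ℕ → α → NForm α
  | or   : NForm α → NForm α → NForm α
  | and  : NForm α → NForm α → NForm α

variable {α : Type}

/-- Name-preserving De Morgan negation, w.r.t. an involution `bar` on atoms. -/
def negF (bar : α → α) : NForm α → NForm α
  | .atom x a => .atom x (bar a)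
  | .or A B => .and (negF bar A) (negF bar B)
  | .and A B => .or (negF bar A) (negF bar B)

/-- The set of names occurring in a named formula. -/
def NForm.names : NForm α → Set ℕ
  | .atom x _ => {x}
  | .or A B => A.names ∪ B.names
  | .and A B => A.names ∪ B.names

/-- A named formula is sharing-free if every name occurs at most once in it. -/
def NForm.sharingFree : NForm α → Prop
  | .atom _ _ => True
  | .or A B => A.sharingFree ∧ B.sharingFree ∧ Disjoint A.names B.names
  | .and A B => A.sharingFree ∧ B.sharingFree ∧ Disjoint A.names B.names

def NForm.isAtom : NForm α → Prop
  | .atom _ _ => True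
  | _ => False

/-- Anonymous formulas (shapes): `A ≡ B` iff their shapes coincide. -/
inductive Shape (α : Type) : Type
  | atom : α → Shape α
  | or   : Shape α → Shape α → Shape α
  | and  : Shape α → Shape α → Shape α

def NForm.shape : NForm α → Shape α
  | .atom _ a => .atom a
  | .or A B => .or A.shape B.shape
  | .and A B => .and A.shape B.shape

/-- `HasAtom A x a`: the atomic formula `x:a` occurs in `A`. -/
def HasAtom : NForm α → ℕ → α → Prop
  | .atom y b, x, a => y = x ∧ b = a
  | .or A B, x, a => HasAtom A x a ∨ HasAtom B x a
  | .and A B, x, a => HasAtom A x a ∨ HasAtom B x a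

/-- Names of a finite set of named formulas. -/
def snames (Γ : Finset (NForm α)) : Set ℕ := ⋃ A ∈ Γ, A.names

/-- A finite set of named formulas is sharing-free if all its elements are
sharing-free with pairwise disjoint name sets. -/
def SFSet (Γ : Finset (NForm α)) : Prop :=
  (∀ A ∈ Γ, A.sharingFree) ∧
  ∀ A ∈ Γ, ∀ B ∈ Γ, A ≠ B → Disjoint A.names B.names

/-- `x:a` occurs in some formula of `Γ` (i.e. `Γ[x] = a` for sharing-free `Γ`). -/
def HasAtomS (Γ : Finset (NForm α)) (x : ℕ) (a : α) : Prop :=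
  ∃ A ∈ Γ, HasAtom A x a

/-- Branch sets of named formulas. -/
def BrF : NForm α → Set (Set ℕ)
  | .atom x _ => {{x}}
  | .or A B => {X | ∃ Y ∈ BrF A, ∃ Z ∈ BrF B, X = Y ∪ Z}
  | .and A B => BrF A ∪ BrF B

/-- Branch sets of sequents (finite sharing-free sets of named formulas). -/
def BrS (Γ : Finset (NForm α)) : Set (Set ℕ) :=
  {X | X ⊆ snames Γ ∧ ∀ A ∈ Γ, X ∩ A.names ∈ BrF A}

/-! ## Branch-labeled name graphs -/

/-- A branch-labeled name graph: vertices and a relation between unordered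
pairs of vertices and branch labels. -/
structure BLGraph : Type where
  verts : Set ℕ
  rel : Sym2 ℕ → Set ℕ → Prop

/-- Well-formedness of a bl-graph: related pairs consist of distinct vertices,
labels are sets of vertices, and each edge is included in its labels. -/
def BLGraph.IsBL (G : BLGraph) : Prop :=
  ∀ e X, G.rel e X → ¬ e.IsDiag ∧ X ⊆ G.verts ∧ ∀ v ∈ e, v ∈ X

def BLGraph.Edges (G : BLGraph) : Set (Sym2 ℕ) := {e | ∃ X, G.rel e X}

def BLGraph.Br (G : BLGraph) : Set (Set ℕ) := {X | ∃ e, G.rel e X}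

def BLGraph.union (G H : BLGraph) : BLGraph :=
  ⟨G.verts ∪ H.verts, fun e X => G.rel e X ∨ H.rel e X⟩

/-- Restriction `G↾_S` of a bl-graph. -/
def BLGraph.restrict (G : BLGraph) (S : Set ℕ) : BLGraph :=
  ⟨G.verts ∩ S, fun e X => G.rel e X ∧ X ⊆ S⟩

/-- The interface-relativized edge-branch relation `e ⊰^I_G X`. -/
def BLGraph.relI (G : BLGraph) (I : Set ℕ) (e : Sym2 ℕ) (X : Set ℕ) : Prop :=
  ∃ Y, G.rel e Y ∧ X = Y \ I

/-- `z 0, …, z (n-1)` is an `X`-labeled alternating path between `G` and `H`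
through the interface `I`. -/
def AltPath (G H : BLGraph) (I X : Set ℕ) (n : ℕ) (z : ℕ → ℕ) : Prop :=
  1 < n ∧
  (∀ i < n, ∀ j < n, z i = z j → i = j) ∧
  (∀ i, 0 < i → i + 1 < n → z i ∈ I) ∧
  ((∀ i, i + 1 < n →
      (Even i → G.relI I s(z i, z (i + 1)) X) ∧ (¬ Even i → H.relI I s(z i, z (i + 1)) X)) ∨
   (∀ i, i + 1 < n →
      (Even i → H.relI I s(z i, z (i + 1)) X) ∧ (¬ Even i → G.relI I s(z i, z (i + 1)) X)))

/-- Composition of bl-graphs over an interface `I`. -/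
def BLGraph.comp (G H : BLGraph) (I : Set ℕ) : BLGraph :=
  ⟨(G.verts ∪ H.verts) \ I,
   fun e X => ∃ n z, AltPath G H I X n z ∧ z 0 ∉ I ∧ z (n - 1) ∉ I ∧
     e = s(z 0, z (n - 1))⟩

/-- The weakening operator on bl-graphs: add vertices `V` and extend every
branch label by a member of `Brs`. -/
def blwk (V : Set ℕ) (Brs : Set (Set ℕ)) (G : BLGraph) : BLGraph :=
  ⟨G.verts ∪ V, fun e X => ∃ Y Z, G.rel e Y ∧ Z ∈ Brs ∧ X = Y ∪ Z⟩

/-- The bl-identity graph `id_{A,C}` on a pair of dual formulas. -/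
def blid : NForm α → NForm α → BLGraph
  | .atom x _, .atom y _ => ⟨{x, y}, fun e X => e = s(x, y) ∧ X = {x, y}⟩
  | .or A1 A2, .and C1 C2 =>
      (blwk A2.names (BrF A2) (blid A1 C1)).union (blwk A1.names (BrF A1) (blid A2 C2))
  | .and A1 A2, .or C1 C2 =>
      (blwk C2.names (BrF C2) (blid A1 C1)).union (blwk C1.names (BrF C1) (blid A2 C2))
  | _, _ => ⟨∅, fun _ _ => False⟩

/-! ## Simple name graphs -/

/-- A simple name graph. -/
structure NGraph : Type where
  verts : Set ℕ
  edges : Set (Sym2 ℕ)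

/-- Subgraph relation `H ⊑ G`. -/
def NGraph.Sub (H G : NGraph) : Prop := H.verts ⊆ G.verts ∧ H.edges ⊆ G.edges

def NGraph.union (G H : NGraph) : NGraph := ⟨G.verts ∪ H.verts, G.edges ∪ H.edges⟩

/-- Induced subgraph `G↾_S`. -/
def NGraph.restrict (G : NGraph) (S : Set ℕ) : NGraph :=
  ⟨G.verts ∩ S, {e ∈ G.edges | ∀ v ∈ e, v ∈ S}⟩

/-- Alternating paths between simple name graphs through an interface. -/
def NAltPath (G H : NGraph) (I : Set ℕ) (n : ℕ) (z : ℕ → ℕ) : Prop :=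
  0 < n ∧
  (∀ i < n, ∀ j < n, z i = z j → i = j) ∧
  (∀ i, 0 < i → i + 1 < n → z i ∈ I) ∧
  ((∀ i, i + 1 < n →
      (Even i → s(z i, z (i + 1)) ∈ G.edges) ∧ (¬ Even i → s(z i, z (i + 1)) ∈ H.edges)) ∨
   (∀ i, i + 1 < n →
      (Even i → s(z i, z (i + 1)) ∈ H.edges) ∧ (¬ Even i → s(z i, z (i + 1)) ∈ G.edges)))

/-- Composition of simple name graphs over an interface. -/
def NGraph.comp (G H : NGraph) (I : Set ℕ) : NGraph :=
  ⟨(G.verts ∪ H.verts) \ I,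
   {e | ∃ x y, x ≠ y ∧ x ∈ (G.verts ∪ H.verts) \ I ∧ y ∈ (G.verts ∪ H.verts) \ I ∧
        e = s(x, y) ∧ ∃ n z, NAltPath G H I n z ∧ z 0 = x ∧ z (n - 1) = y}⟩

/-- The identity graph `Id_{A,C}` on a pair of dual formulas. -/
def idg : NForm α → NForm α → NGraph
  | .atom x _, .atom y _ => ⟨{x, y}, {s(x, y)}⟩
  | .or A1 A2, .and C1 C2 => (idg A1 C1).union (idg A2 C2)
  | .and A1 A2, .or C1 C2 => (idg A1 C1).union (idg A2 C2)
  | _, _ => ⟨∅, ∅⟩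

/-- The edgeless (weakening) graph on the names of `Γ`. -/
def wkg (Γ : Finset (NForm α)) : NGraph := ⟨snames Γ, ∅⟩

/-! ## Named GS4 derivations -/

/-- Named GS4 derivation trees. -/
inductive Deriv (α : Type) : Type
  | ax (Γ : Finset (NForm α)) (A C : NForm α)
  | cut (A : NForm α) (P Q : Deriv α)
  | sup (P Q : Deriv α)
  | orI (A B : NForm α) (P : Deriv α)
  | andI (A B : NForm α) (P Q : Deriv α)

/-- Conclusion of a derivation tree. -/
def concl : Deriv α → Finset (NForm α)
  | .ax Γ A C => insert A (insert C Γ)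
  | .cut A P _ => (concl P).erase A
  | .sup P _ => concl P
  | .orI A B P => insert (NForm.or A B) (((concl P).erase A).erase B)
  | .andI A B P _ => insert (NForm.and A B) ((concl P).erase A)

/-- Well-formedness of derivation trees w.r.t. the atom involution `bar`:
each rule is applied correctly to sharing-free named sequents. -/
def WF (bar : α → α) : Deriv α → Prop
  | .ax Γ A C =>
      A.shape = (negF bar C).shape ∧
      A.sharingFree ∧ C.sharingFree ∧ SFSet Γ ∧
      Disjoint A.names C.names ∧
      Disjoint A.names (snames Γ) ∧ Disjoint C.names (snames Γ)
  | .cut A P Q =>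
      WF bar P ∧ WF bar Q ∧
      ∃ Γ : Finset (NForm α), A ∉ Γ ∧ negF bar A ∉ Γ ∧
        concl P = insert A Γ ∧ concl Q = insert (negF bar A) Γ ∧
        A.sharingFree ∧ SFSet Γ ∧ Disjoint A.names (snames Γ)
  | .sup P Q => WF bar P ∧ WF bar Q ∧ concl P = concl Q
  | .orI A B P =>
      WF bar P ∧
      ∃ Γ : Finset (NForm α), A ∉ Γ ∧ B ∉ Γ ∧ A ≠ B ∧
        concl P = insert A (insert B Γ) ∧
        A.sharingFree ∧ B.sharingFree ∧ SFSet Γ ∧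
        Disjoint A.names B.names ∧
        Disjoint A.names (snames Γ) ∧ Disjoint B.names (snames Γ)
  | .andI A B P Q =>
      WF bar P ∧ WF bar Q ∧
      ∃ Γ : Finset (NForm α), A ∉ Γ ∧ B ∉ Γ ∧
        concl P = insert A Γ ∧ concl Q = insert B Γ ∧
        A.sharingFree ∧ B.sharingFree ∧ SFSet Γ ∧
        Disjoint A.names B.names ∧
        Disjoint A.names (snames Γ) ∧ Disjoint B.names (snames Γ)

/-- A derivation is cut-free if it contains no cut rule. -/
def CutFree : Deriv α → Prop
  | .ax _ _ _ => True
  | .cut _ _ _ => False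
  | .sup P Q => CutFree P ∧ CutFree Q
  | .orI _ _ P => CutFree P
  | .andI _ _ P Q => CutFree P ∧ CutFree Q

/-- The branch-labeled axiom graph `⟨⟨P⟩⟩` of a derivation. -/
def blaxg : Deriv α → BLGraph
  | .ax Γ A C => blwk (snames Γ) (BrS Γ) (blid A C)
  | .cut A P Q => BLGraph.comp (blaxg P) (blaxg Q) A.names
  | .sup P Q => (blaxg P).union (blaxg Q)
  | .orI _ _ P => blaxg P
  | .andI _ _ P Q => (blaxg P).union (blaxg Q)

/-- The (simple) axiom graph `⟦P⟧` of a derivation. -/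
def axg : Deriv α → NGraph
  | .ax Γ A C => (wkg Γ).union (idg A C)
  | .cut A P Q => NGraph.comp (axg P) (axg Q) A.names
  | .sup P Q => (axg P).union (axg Q)
  | .orI _ _ P => axg P
  | .andI _ _ P Q => (axg P).union (axg Q)

/-! ## Inversion and isolation -/

/-- Inversion of a disjunction `D ∨ E` in the conclusion. -/
def inv (D E : NForm α) : Deriv α → Deriv α
  | .ax Γ A C =>
      if A = NForm.or D E then
        match C with
        | .and C1 C2 =>
            .andI C1 C2 (.ax (insert E Γ) D C1) (.ax (insert D Γ) E C2)
        | _ => .ax Γ A C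
      else if C = NForm.or D E then
        match A with
        | .and A1 A2 =>
            .andI A1 A2 (.ax (insert E Γ) A1 D) (.ax (insert D Γ) A2 E)
        | _ => .ax Γ A C
      else
        .ax (insert D (insert E (Γ.erase (NForm.or D E)))) A C
  | .cut A P Q => .cut A (inv D E P) (inv D E Q)
  | .sup P Q => .sup (inv D E P) (inv D E Q)
  | .orI A B P => if A = D ∧ B = E then P else .orI A B (inv D E P)
  | .andI A B P Q => .andI A B (inv D E P) (inv D E Q)

/-- Left inversion of a conjunction `D ∧ E` in the conclusion. -/
def invl (D E : NForm α) : Deriv α → Deriv α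
  | .ax Γ A C =>
      if A = NForm.and D E then
        match C with
        | .or C1 C2 => .orI C1 C2 (.ax (insert C2 Γ) D C1)
        | _ => .ax Γ A C
      else if C = NForm.and D E then
        match A with
        | .or A1 A2 => .orI A1 A2 (.ax (insert A2 Γ) A1 D)
        | _ => .ax Γ A C
      else
        .ax (insert D (Γ.erase (NForm.and D E))) A C
  | .cut A P Q => .cut A (invl D E P) (invl D E Q)
  | .sup P Q => .sup (invl D E P) (invl D E Q)
  | .orI A B P => .orI A B (invl D E P)
  | .andI A B P Q => if A = D ∧ B = E then P else .andI A B (invl D E P) (invl D E Q)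

/-- Right inversion of a conjunction `D ∧ E` in the conclusion. -/
def invr (D E : NForm α) : Deriv α → Deriv α
  | .ax Γ A C =>
      if A = NForm.and D E then
        match C with
        | .or C1 C2 => .orI C1 C2 (.ax (insert C1 Γ) E C2)
        | _ => .ax Γ A C
      else if C = NForm.and D E then
        match A with
        | .or A1 A2 => .orI A1 A2 (.ax (insert A1 Γ) A2 E)
        | _ => .ax Γ A C
      else
        .ax (insert E (Γ.erase (NForm.and D E))) A C
  | .cut A P Q => .cut A (invr D E P) (invr D E Q)
  | .sup P Q => .sup (invr D E P) (invr D E Q)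
  | .orI A B P => .orI A B (invr D E P)
  | .andI A B P Q => if A = D ∧ B = E then Q else .andI A B (invr D E P) (invr D E Q)

/-- Isolation of a non-atomic formula in the conclusion. -/
def isl : NForm α → Deriv α → Deriv α
  | .or A B, P => .orI A B (inv A B P)
  | .and A B, P => .andI A B (invl A B P) (invr A B P)
  | .atom _ _, P => P

/-- Totality of a bl-graph w.r.t. a sharing-free named sequent. -/
def Total (bar : α → α) (G : BLGraph) (Γ : Finset (NForm α)) : Prop :=
  G.verts = snames Γ ∧
  G.Br = BrS Γ ∧
  ∀ x y : ℕ, s(x, y) ∈ G.Edges →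
    ∀ a b : α, HasAtomS Γ x a → HasAtomS Γ y b → a = bar b

end GS4

/-!
By induction on the derivation. All rules but cut only need the recursive description of branch
sets, and the identity graph of a compound formula is what η-expansion of the axiom yields.

For a cut on `A`, orient every edge of the two graphs `G` and `H` from its negative to its positive
name, where `P` and `Q` are the sets of positive names of the two premises. Since the premises carry
dual atoms exactly at the names of `A`, the symmetric difference of `P` and `Q` is the interface.
Hence two consecutive oriented edges meet in the interface and belong to different graphs, so that a
directed path between names outside the interface is a complete alternating path up to loops.

Suppose that no such path is labeled by the branch `X` of the conclusion. Let `R` be the set of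
names reachable from outside the interface along oriented edges labeled `X`; an oriented edge
leaving a name of `R` then ends in `R` and inside the interface. Let `S` be the set of names `x`
with `x ∈ R ↔ x ∉ P`. Either `A` has a branch inside `S` or its dual has a branch avoiding `S`.
Together with `X` that branch labels an edge, by totality of the premises. If its source is in `R`,
its target contradicts the choice of `S`; otherwise its source lies in the interface and does so.
-/

namespace GS4

/-! ### Names and atoms -/

section Names

variable {α : Type} {bar : α → α} {A B : NForm α} {Γ Δ : Finset (NForm α)} {x : ℕ} {a b : α}

theorem snames_union : snames (Γ ∪ Δ) = snames Γ ∪ snames Δ :=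
  Finset.set_biUnion_union Γ Δ NForm.names

theorem snames_insert : snames (insert A Γ) = A.names ∪ snames Γ :=
  Finset.set_biUnion_insert A Γ NForm.names

theorem snames_singleton : snames {A} = A.names :=
  Finset.set_biUnion_singleton A NForm.names

theorem names_subset_snames (h : A ∈ Γ) : A.names ⊆ snames Γ :=
  Set.subset_biUnion_of_mem (u := NForm.names) h

theorem names_negF (bar : α → α) (A : NForm α) : (negF bar A).names = A.names := by
  induction A with
  | atom x a => rfl
  | or A B ihA ihB | and A B ihA ihB => simp only [negF, NForm.names, ihA, ihB]

theorem mem_names_iff : x ∈ A.names ↔ ∃ a, HasAtom A x a := by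
  induction A with
  | atom y b => simp [NForm.names, HasAtom, eq_comm]
  | or A B ihA ihB | and A B ihA ihB => simp [NForm.names, HasAtom, ihA, ihB, exists_or]

theorem HasAtom.mem_names (h : HasAtom A x a) : x ∈ A.names :=
  mem_names_iff.2 ⟨a, h⟩

theorem mem_snames_iff : x ∈ snames Γ ↔ ∃ a, HasAtomS Γ x a := by
  simp only [snames, Set.mem_iUnion, mem_names_iff, HasAtomS]
  grind

theorem HasAtomS.mono (h : HasAtomS Γ x a) (hΓΔ : Γ ⊆ Δ) : HasAtomS Δ x a :=
  h.imp fun _ ⟨hA, hx⟩ => ⟨hΓΔ hA, hx⟩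

theorem hasAtomS_insert : HasAtomS (insert A Γ) x a ↔ HasAtom A x a ∨ HasAtomS Γ x a := by
  simp [HasAtomS]

theorem hasAtom_negF (hbar : Function.Injective bar) :
    HasAtom (negF bar A) x (bar a) ↔ HasAtom A x a := by
  induction A with
  | atom y b => exact and_congr_right' hbar.eq_iff
  | or A B ihA ihB | and A B ihA ihB => exact or_congr ihA ihB

theorem HasAtom.unique (hA : A.sharingFree) (ha : HasAtom A x a) (hb : HasAtom A x b) :
    a = b := by
  induction A with
  | atom y c => exact ha.2.symm.trans hb.2
  | or A B ihA ihB | and A B ihA ihB =>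
    obtain ⟨hA, hB, hAB⟩ := hA
    rcases ha with ha | ha <;> rcases hb with hb | hb
    · exact ihA hA ha hb
    · exact (Set.disjoint_left.1 hAB ha.mem_names hb.mem_names).elim
    · exact (Set.disjoint_left.1 hAB hb.mem_names ha.mem_names).elim
    · exact ihB hB ha hb

theorem HasAtomS.unique (hΓ : SFSet Γ) (ha : HasAtomS Γ x a) (hb : HasAtomS Γ x b) : a = b := by
  obtain ⟨A, hA, ha⟩ := ha
  obtain ⟨B, hB, hb⟩ := hb
  obtain rfl : A = B := by
    by_contra hAB
    exact Set.disjoint_left.1 (hΓ.2 A hA B hB hAB) ha.mem_names hb.mem_names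
  exact ha.unique (hΓ.1 A hA) hb

theorem NForm.sharingFree.negF (h : A.sharingFree) : (negF bar A).sharingFree := by
  induction A with
  | atom y b => trivial
  | or A B ihA ihB | and A B ihA ihB =>
    exact ⟨ihA h.1, ihB h.2.1, by simpa only [names_negF] using h.2.2⟩

theorem SFSet.insert (hΓ : SFSet Γ) (hA : A.sharingFree) (hd : Disjoint A.names (snames Γ)) :
    SFSet (insert A Γ) := by
  have hAΓ : ∀ B ∈ Γ, Disjoint A.names B.names := fun B hB =>
    hd.mono_right (names_subset_snames hB)
  refine ⟨Finset.forall_mem_insert .. |>.2 ⟨hA, hΓ.1⟩, fun B hB C hC hBC => ?_⟩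
  rcases Finset.mem_insert.1 hB with rfl | hBΓ <;> rcases Finset.mem_insert.1 hC with rfl | hCΓ
  · exact (hBC rfl).elim
  · exact hAΓ C hCΓ
  · exact (hAΓ B hBΓ).symm
  · exact hΓ.2 B hBΓ C hCΓ hBC

theorem sfSet_pair (hA : A.sharingFree) (hB : B.sharingFree) (hd : Disjoint A.names B.names) :
    SFSet {A, B} := by
  have hB' : SFSet {B} := by
    simpa [SFSet] using hB
  exact hB'.insert hA (by rwa [snames_singleton])

theorem snames_pair : snames {A, B} = A.names ∪ B.names := by
  rw [snames_insert, snames_singleton]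

end Names

/-! ### Branches -/

section Branches

variable {α : Type} {A B : NForm α} {Γ Δ : Finset (NForm α)} {X : Set ℕ}

theorem subset_names_of_mem_brF (h : X ∈ BrF A) : X ⊆ A.names := by
  induction A generalizing X with
  | atom y c => exact (Set.mem_singleton_iff.1 h).subset
  | or A B ihA ihB =>
    obtain ⟨Y, hY, Z, hZ, rfl⟩ := h
    exact Set.union_subset_union (ihA hY) (ihB hZ)
  | and A B ihA ihB =>
    exact h.elim (fun h => (ihA h).trans Set.subset_union_left)
      fun h => (ihB h).trans Set.subset_union_right

theorem exists_branch_subset_or_compl (bar : α → α) (A : NForm α) (S : Set ℕ) :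
    (∃ Y ∈ BrF A, Y ⊆ S) ∨ ∃ Z ∈ BrF (negF bar A), Z ⊆ Sᶜ := by
  induction A with
  | atom x a =>
    by_cases h : x ∈ S
    · exact .inl ⟨{x}, rfl, Set.singleton_subset_iff.2 h⟩
    · exact .inr ⟨{x}, rfl, Set.singleton_subset_iff.2 h⟩
  | or A B ihA ihB =>
    rcases ihA with ⟨Y, hY, hYS⟩ | ⟨Y, hY, hYS⟩
    · rcases ihB with ⟨Z, hZ, hZS⟩ | ⟨Z, hZ, hZS⟩
      · exact .inl ⟨Y ∪ Z, ⟨Y, hY, Z, hZ, rfl⟩, Set.union_subset hYS hZS⟩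
      · exact .inr ⟨Z, .inr hZ, hZS⟩
    · exact .inr ⟨Y, .inl hY, hYS⟩
  | and A B ihA ihB =>
    rcases ihA with ⟨Y, hY, hYS⟩ | ⟨Y, hY, hYS⟩
    · exact .inl ⟨Y, .inl hY, hYS⟩
    · rcases ihB with ⟨Z, hZ, hZS⟩ | ⟨Z, hZ, hZS⟩
      · exact .inl ⟨Z, .inr hZ, hZS⟩
      · exact .inr ⟨Y ∪ Z, ⟨Y, hY, Z, hZ, rfl⟩, Set.union_subset hYS hZS⟩

theorem brS_singleton : BrS {A} = BrF A := by
  ext X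
  simp only [BrS, snames_singleton, Finset.mem_singleton, forall_eq, Set.mem_ofPred_eq]
  refine ⟨fun ⟨hX, h⟩ => Set.inter_eq_left.2 hX ▸ h, fun h => ?_⟩
  have hX := subset_names_of_mem_brF h
  exact ⟨hX, (Set.inter_eq_left.2 hX).symm ▸ h⟩

theorem mem_brS_union (hd : Disjoint (snames Γ) (snames Δ)) :
    X ∈ BrS (Γ ∪ Δ) ↔ ∃ Y ∈ BrS Γ, ∃ Z ∈ BrS Δ, X = Y ∪ Z := by
  constructor
  · rintro ⟨hX, hbr⟩
    have restrict : ∀ Θ ⊆ Γ ∪ Δ, X ∩ snames Θ ∈ BrS Θ := fun Θ hΘ =>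
      ⟨Set.inter_subset_right, fun A hA => by
        rw [Set.inter_assoc, Set.inter_eq_right.2 (names_subset_snames hA)]
        exact hbr A (hΘ hA)⟩
    refine ⟨_, restrict Γ Finset.subset_union_left, _, restrict Δ Finset.subset_union_right, ?_⟩
    rw [← Set.inter_union_distrib_left, ← snames_union, Set.inter_eq_left.2 hX]
  · rintro ⟨Y, ⟨hY, hbrY⟩, Z, ⟨hZ, hbrZ⟩, rfl⟩
    refine ⟨snames_union (Γ := Γ) ▸ Set.union_subset_union hY hZ, fun A hA => ?_⟩
    rw [Set.union_inter_distrib_right]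
    rcases Finset.mem_union.1 hA with hA | hA
    · rw [(hd.symm.mono hZ (names_subset_snames hA)).inter_eq, Set.union_empty]
      exact hbrY A hA
    · rw [(hd.mono hY (names_subset_snames hA)).inter_eq, Set.empty_union]
      exact hbrZ A hA

theorem mem_brS_insert (hd : Disjoint A.names (snames Γ)) :
    X ∈ BrS (insert A Γ) ↔ ∃ Y ∈ BrF A, ∃ Z ∈ BrS Γ, X = Y ∪ Z := by
  rw [Finset.insert_eq, mem_brS_union (by rwa [snames_singleton]), brS_singleton]

theorem brS_insert_or (hAB : Disjoint A.names B.names) (hA : Disjoint A.names (snames Γ))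
    (hB : Disjoint B.names (snames Γ)) :
    BrS (insert (.or A B) Γ) = BrS (insert A (insert B Γ)) := by
  ext X
  rw [mem_brS_insert (A := .or A B) (Set.disjoint_union_left.2 ⟨hA, hB⟩),
    mem_brS_insert (snames_insert (A := B) ▸ Set.disjoint_union_right.2 ⟨hAB, hA⟩)]
  simp only [BrF, Set.mem_ofPred_eq, mem_brS_insert hB]
  grind [Set.union_assoc]

theorem brS_insert_and (hA : Disjoint A.names (snames Γ)) (hB : Disjoint B.names (snames Γ)) :
    BrS (insert (.and A B) Γ) = BrS (insert A Γ) ∪ BrS (insert B Γ) := by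
  ext X
  rw [Set.mem_union, mem_brS_insert (A := .and A B) (Set.disjoint_union_left.2 ⟨hA, hB⟩),
    mem_brS_insert hA, mem_brS_insert hB]
  simp only [BrF, Set.mem_union, or_and_right, exists_or]

theorem diff_names_mem_brS (hd : Disjoint A.names (snames Γ)) (h : X ∈ BrS (insert A Γ)) :
    X \ A.names ∈ BrS Γ := by
  obtain ⟨Y, hY, Z, hZ, rfl⟩ := (mem_brS_insert hd).1 h
  rwa [Set.union_sdiff_distrib, Set.sdiff_eq_empty.2 (subset_names_of_mem_brF hY), Set.empty_union,
    (hd.symm.mono_left hZ.1).sdiff_eq_left]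

end Branches

/-! ### Polarities -/

section Polarity

variable {α : Type} {bar : α → α} {pos : Set α} {I : Set ℕ} {A : NForm α}
  {Γ Δ : Finset (NForm α)} {x : ℕ} {a : α}

theorem exists_polarity {β : Type*} {bar : β → β} (hbar : Function.Involutive bar)
    (hfix : ∀ b, bar b ≠ b) : ∃ pos : Set β, ∀ b, bar b ∈ pos ↔ b ∉ pos := by
  let : LinearOrder β := linearOrderOfSTO WellOrderingRel
  refine ⟨{b | b < bar b}, fun b => ?_⟩
  simp only [Set.mem_ofPred_eq, hbar b, not_lt]
  exact (hfix b).le_iff_lt.symm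

/-- The names of `Γ` whose atom belongs to the set `pos` of atoms regarded as positive. -/
def positiveNames (pos : Set α) (Γ : Finset (NForm α)) : Set ℕ :=
  {x | ∃ a ∈ pos, HasAtomS Γ x a}

theorem HasAtomS.mem_positiveNames (hΓ : SFSet Γ) (hx : HasAtomS Γ x a) :
    x ∈ positiveNames pos Γ ↔ a ∈ pos :=
  ⟨fun ⟨_, hb, hxb⟩ => hx.unique hΓ hxb ▸ hb, fun ha => ⟨a, ha, hx⟩⟩

/-- The sequents `Γ` and `Δ` carry dual atoms at the names in `I` and the same atoms elsewhere,
as the two premises of a cut on a formula with set of names `I` do. -/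
structure DualOn (bar : α → α) (I : Set ℕ) (Γ Δ : Finset (NForm α)) : Prop where
  dual : ∀ x ∈ I, ∀ a, HasAtomS Δ x (bar a) ↔ HasAtomS Γ x a
  agree : ∀ x ∉ I, ∀ a, HasAtomS Δ x a ↔ HasAtomS Γ x a

theorem DualOn.symm (hbar : Function.Involutive bar) (h : DualOn bar I Γ Δ) :
    DualOn bar I Δ Γ where
  dual x hx a := by simpa only [hbar a] using (h.dual x hx (bar a)).symm
  agree x hx a := (h.agree x hx a).symm

theorem dualOn_insert_negF (hbar : Function.Injective bar) (hd : Disjoint A.names (snames Γ)) :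
    DualOn bar A.names (insert A Γ) (insert (negF bar A) Γ) where
  dual x hx a := by
    have hxΓ : ∀ b, ¬HasAtomS Γ x b := fun b hb =>
      Set.disjoint_left.1 hd hx (mem_snames_iff.2 ⟨b, hb⟩)
    simp only [hasAtomS_insert, hasAtom_negF hbar, hxΓ]
  agree x hx a := by
    have hxA : ¬HasAtom A x a := fun h => hx h.mem_names
    have hxnA : ¬HasAtom (negF bar A) x a := fun h => hx (names_negF bar A ▸ h.mem_names)
    simp only [hasAtomS_insert, hxA, hxnA]

theorem DualOn.symmDiff_positiveNames (h : DualOn bar I Γ Δ) (hΓ : SFSet Γ) (hΔ : SFSet Δ)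
    (hI : I ⊆ snames Γ) (hpos : ∀ a, bar a ∈ pos ↔ a ∉ pos) :
    symmDiff (positiveNames pos Γ) (positiveNames pos Δ) = I := by
  ext x
  rw [Set.mem_symmDiff]
  by_cases hx : x ∈ I
  · obtain ⟨a, ha⟩ := mem_snames_iff.1 (hI hx)
    rw [ha.mem_positiveNames hΓ, ((h.dual x hx a).2 ha).mem_positiveNames hΔ, hpos a]
    tauto
  · have hiff : x ∈ positiveNames pos Δ ↔ x ∈ positiveNames pos Γ :=
      exists_congr fun a => and_congr_right' (h.agree x hx a)
    tauto

end Polarity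

/-! ### Paths -/

section Paths

variable {β : Type*} {r S T S' T' : β → β → Prop} {p q I : β → Prop} {n : ℕ} {z : ℕ → β}

theorem exists_injOn_chain {u v : β} (h : Relation.ReflTransGen r u v) :
    ∃ (n : ℕ) (z : ℕ → β), z 0 = u ∧ z n = v ∧ (∀ i < n, r (z i) (z (i + 1))) ∧
      Set.InjOn z (Set.Iic n) := by
  induction h with
  | refl =>
    exact ⟨0, fun _ => u, rfl, rfl, fun i hi => absurd hi i.not_lt_zero, by simp [Set.InjOn]⟩
  | @tail v w _ hvw ih =>
    obtain ⟨n, z, h0, hn, hr, hinj⟩ := ih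
    by_cases hw : ∃ k ≤ n, z k = w
    · obtain ⟨k, hk, rfl⟩ := hw
      exact ⟨k, z, h0, rfl, fun i hi => hr i (hi.trans_le hk),
        hinj.mono (Set.Iic_subset_Iic.2 hk)⟩
    · have hz : ∀ i ≤ n, Function.update z (n + 1) w i = z i := fun i hi =>
        Function.update_of_ne (by lia) _ _
      refine ⟨n + 1, Function.update z (n + 1) w, (hz 0 n.zero_le).trans h0,
        Function.update_self .., fun i hi => ?_, ?_⟩
      · rcases Nat.lt_succ_iff_lt_or_eq.1 hi with hi | rfl
        · rw [hz i hi.le, hz (i + 1) hi]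
          exact hr i hi
        · rwa [hz i le_rfl, Function.update_self, hn]
      · have hzn : Set.EqOn z (Function.update z (n + 1) w) (Set.Iic n) := fun i hi =>
          (hz i hi).symm
        have hIic : Set.Iic (n + 1) = insert (n + 1) (Set.Iic n) := Order.Iic_succ n
        rw [hIic, Set.injOn_insert (by simp), ← hzn.injOn_iff, ← hzn.image_eq,
          Function.update_self]
        exact ⟨hinj, hw⟩

/-- The steps of the sequence `z 0, …, z (n - 1)` belong alternately to `S` and to `T`, starting
with `S`. -/
def Alternates (S T : β → β → Prop) (n : ℕ) (z : ℕ → β) : Prop :=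
  ∀ i, i + 1 < n → (Even i → S (z i) (z (i + 1))) ∧ (¬Even i → T (z i) (z (i + 1)))

theorem Alternates.mono (h : Alternates S T n z) (hS : ∀ u v, S u v → S' u v)
    (hT : ∀ u v, T u v → T' u v) : Alternates S' T' n z :=
  fun i hi => (h i hi).imp (fun h hev => hS _ _ (h hev)) fun h hodd => hT _ _ (h hodd)

theorem alternates_of_chain_of_head (hSS : ∀ u v w, S u v → ¬S v w)
    (hTT : ∀ u v w, T u v → ¬T v w)
    (h : ∀ i, i + 1 < n → S (z i) (z (i + 1)) ∨ T (z i) (z (i + 1)))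
    (h0 : 1 < n → S (z 0) (z 1)) : Alternates S T n z := by
  intro i
  induction i with
  | zero => exact fun hn => ⟨fun _ => h0 hn, fun hodd => (hodd Even.zero).elim⟩
  | succ i ih =>
    intro hi
    obtain ⟨ihS, ihT⟩ := ih (by lia)
    rw [Nat.even_add_one, not_not]
    exact ⟨fun hodd => (h _ hi).resolve_right (hTT _ _ _ (ihT hodd)),
      fun hev => (h _ hi).resolve_left (hSS _ _ _ (ihS hev))⟩

theorem alternates_of_chain (hSS : ∀ u v w, S u v → ¬S v w) (hTT : ∀ u v w, T u v → ¬T v w)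
    (h : ∀ i, i + 1 < n → S (z i) (z (i + 1)) ∨ T (z i) (z (i + 1))) :
    Alternates S T n z ∨ Alternates T S n z := by
  by_cases hn : 1 < n
  · rcases h 0 hn with h0 | h0
    · exact .inl (alternates_of_chain_of_head hSS hTT h fun _ => h0)
    · exact .inr (alternates_of_chain_of_head hTT hSS (fun i hi => (h i hi).symm) fun _ => h0)
  · exact .inl fun i hi => absurd hi (by lia)

theorem Alternates.invariant (h : Alternates S T n z) (hI : ∀ i, 0 < i → i + 1 < n → I (z i))
    (hS : ∀ u v, p u → S u v → I v → q v) (hT : ∀ u v, q u → T u v → I v → p v) (h0 : p (z 0)) :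
    ∀ i, i + 1 < n → (Even i → p (z i)) ∧ (¬Even i → q (z i)) := by
  intro i
  induction i with
  | zero => exact fun _ => ⟨fun _ => h0, fun hodd => (hodd Even.zero).elim⟩
  | succ i ih =>
    intro hi
    obtain ⟨hp, hq⟩ := ih (by lia)
    obtain ⟨hiS, hiT⟩ := h i (by lia)
    have hiI := hI (i + 1) i.succ_pos hi
    rw [Nat.even_add_one, not_not]
    exact ⟨fun hodd => hT _ _ (hq hodd) (hiT hodd) hiI, fun hev => hS _ _ (hp hev) (hiS hev) hiI⟩

theorem Alternates.last_step (h : Alternates S T n z) (hn : 1 < n)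
    (hI : ∀ i, 0 < i → i + 1 < n → I (z i))
    (hS : ∀ u v, p u → S u v → I v → q v) (hT : ∀ u v, q u → T u v → I v → p v) (h0 : p (z 0)) :
    ∃ u, (p u ∧ S u (z (n - 1))) ∨ (q u ∧ T u (z (n - 1))) := by
  obtain ⟨m, rfl⟩ := Nat.exists_eq_add_of_le' hn
  obtain ⟨hp, hq⟩ := h.invariant hI hS hT h0 m (by lia)
  obtain ⟨hmS, hmT⟩ := h m (by lia)
  by_cases hm : Even m
  · exact ⟨z m, .inl ⟨hp hm, hmS hm⟩⟩
  · exact ⟨z m, .inr ⟨hq hm, hmT hm⟩⟩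

end Paths

/-! ### Branch-labeled graphs -/

section Graphs

variable {G H : BLGraph} {I P Q V X : Set ℕ} {Brs : Set (Set ℕ)} {e : Sym2 ℕ} {n : ℕ} {z : ℕ → ℕ}

theorem BLGraph.edges_union : (G.union H).Edges = G.Edges ∪ H.Edges :=
  Set.ext fun _ => exists_or

theorem BLGraph.br_union : (G.union H).Br = G.Br ∪ H.Br :=
  Set.ext fun _ => exists_or

theorem BLGraph.relI.mem_edges (h : G.relI I e X) : e ∈ G.Edges :=
  h.imp fun _ => And.left

theorem BLGraph.IsBL.subset_verts (hG : G.IsBL) (he : e ∈ G.Edges) {v : ℕ} (hv : v ∈ e) :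
    v ∈ G.verts :=
  let ⟨X, heX⟩ := he
  (hG e X heX).2.1 ((hG e X heX).2.2 v hv)

theorem BLGraph.IsBL.union (hG : G.IsBL) (hH : H.IsBL) : (G.union H).IsBL := by
  rintro e X (h | h)
  · obtain ⟨hdiag, hX, he⟩ := hG e X h
    exact ⟨hdiag, hX.trans Set.subset_union_left, he⟩
  · obtain ⟨hdiag, hX, he⟩ := hH e X h
    exact ⟨hdiag, hX.trans Set.subset_union_right, he⟩

theorem BLGraph.IsBL.blwk (hG : G.IsBL) (hV : ∀ Z ∈ Brs, Z ⊆ V) : (blwk V Brs G).IsBL := by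
  rintro e X ⟨Y, Z, hY, hZ, rfl⟩
  obtain ⟨hdiag, hYG, he⟩ := hG e Y hY
  exact ⟨hdiag, Set.union_subset_union hYG (hV Z hZ), fun v hv => .inl (he v hv)⟩

theorem BLGraph.IsBL.relI (hG : G.IsBL) (h : G.relI I e X) :
    X ⊆ G.verts \ I ∧ ∀ v ∈ e, v ∉ I → v ∈ X := by
  obtain ⟨Y, hY, rfl⟩ := h
  obtain ⟨-, hYG, he⟩ := hG e Y hY
  exact ⟨Set.sdiff_subset_sdiff_left hYG, fun v hv hvI => ⟨he v hv, hvI⟩⟩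

theorem AltPath.alternates (h : AltPath G H I X n z) :
    Alternates (fun u v => G.relI I s(u, v) X) (fun u v => H.relI I s(u, v) X) n z ∨
      Alternates (fun u v => H.relI I s(u, v) X) (fun u v => G.relI I s(u, v) X) n z :=
  h.2.2.2

theorem AltPath.relI (h : AltPath G H I X n z) {i : ℕ} (hi : i + 1 < n) :
    G.relI I s(z i, z (i + 1)) X ∨ H.relI I s(z i, z (i + 1)) X := by
  rcases h.alternates with h | h <;> by_cases hev : Even i
  · exact .inl ((h i hi).1 hev)
  · exact .inr ((h i hi).2 hev)
  · exact .inr ((h i hi).1 hev)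
  · exact .inl ((h i hi).2 hev)

theorem BLGraph.IsBL.comp (hG : G.IsBL) (hH : H.IsBL) : (G.comp H I).IsBL := by
  rintro _ X ⟨n, z, hz, h0, hlast, rfl⟩
  obtain ⟨m, rfl⟩ := Nat.exists_eq_add_of_le' hz.1
  have hedge : ∀ i, i + 1 < m + 2 → X ⊆ (G.verts ∪ H.verts) \ I ∧
      ∀ v ∈ s(z i, z (i + 1)), v ∉ I → v ∈ X := fun i hi => by
    rw [Set.union_sdiff_distrib]
    rcases hz.relI hi with h | h
    · exact (hG.relI h).imp_left fun hX => Set.subset_union_of_subset_left hX _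
    · exact (hH.relI h).imp_left fun hX => Set.subset_union_of_subset_right hX _
  refine ⟨fun hdiag => ?_, (hedge 0 (by lia)).1, Sym2.ball.2 ⟨?_, ?_⟩⟩
  · exact absurd (hz.2.1 0 (by lia) (m + 1) (by lia) hdiag) (by lia)
  · exact (hedge 0 (by lia)).2 _ (Sym2.mem_mk_left _ _) h0
  · exact (hedge m (by lia)).2 _ (Sym2.mem_mk_right _ _) hlast

/-- Every edge of `G` joins a name outside `P` to a name in `P`; for a total graph, `P` is the set
of positive names. -/
def BLGraph.Polarized (G : BLGraph) (P : Set ℕ) : Prop :=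
  ∀ e ∈ G.Edges, ∃ u ∉ P, ∃ v ∈ P, e = s(u, v)

/-- The edges of `G` labeled `X` outside the interface `I`, oriented towards `P`. -/
def BLGraph.Step (G : BLGraph) (I X P : Set ℕ) (u v : ℕ) : Prop :=
  G.relI I s(u, v) X ∧ u ∉ P ∧ v ∈ P

theorem BLGraph.Polarized.exists_mem_iff_of_closed {R : Set ℕ} (hG : G.Polarized P) (hI : Iᶜ ⊆ R)
    (hR : ∀ u ∈ R, ∀ v, G.Step I X P u v → v ∈ R ∩ I) (he : G.relI I e X) :
    ∃ v ∈ e, v ∈ I ∧ (v ∈ R ↔ v ∈ P) := by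
  obtain ⟨u, hu, v, hv, rfl⟩ := hG e he.mem_edges
  by_cases huR : u ∈ R
  · obtain ⟨hvR, hvI⟩ := hR u huR v ⟨he, hu, hv⟩
    exact ⟨v, Sym2.mem_mk_right u v, hvI, iff_of_true hvR hv⟩
  · exact ⟨u, Sym2.mem_mk_left u v, not_not.1 fun h => huR (hI h), iff_of_false huR hu⟩

theorem exists_transGen_step (hG : G.Polarized P) (hH : H.Polarized Q) (hI : symmDiff P Q = I)
    (hcov : ∀ S : Set ℕ, (∃ e, G.relI I e X ∧ ∀ v ∈ e, v ∈ I → v ∈ S) ∨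
      ∃ e, H.relI I e X ∧ ∀ v ∈ e, v ∈ I → v ∉ S) :
    ∃ u ∉ I, ∃ v ∉ I,
      Relation.TransGen (fun u v => G.Step I X P u v ∨ H.Step I X Q u v) u v := by
  by_contra! hno
  let R : Set ℕ := {v | ∃ u ∉ I,
    Relation.ReflTransGen (fun u v => G.Step I X P u v ∨ H.Step I X Q u v) u v}
  have hIR : Iᶜ ⊆ R := fun u hu => ⟨u, hu, .refl⟩
  have hR : ∀ u ∈ R, ∀ v, G.Step I X P u v ∨ H.Step I X Q u v → v ∈ R ∩ I :=
    fun u ⟨w, hw, hwu⟩ v huv => ⟨⟨w, hw, hwu.tail huv⟩,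
      not_not.1 fun hv => hno w hw v hv (.tail' hwu huv)⟩
  rcases hcov {v | v ∈ R ↔ v ∉ P} with ⟨e, he, hS⟩ | ⟨e, he, hS⟩
  · obtain ⟨v, hve, hvI, hv⟩ :=
      hG.exists_mem_iff_of_closed hIR (fun u hu v huv => hR u hu v (.inl huv)) he
    exact iff_not_self (hv.symm.trans (hS v hve hvI))
  · obtain ⟨v, hve, hvI, hv⟩ :=
      hH.exists_mem_iff_of_closed hIR (fun u hu v huv => hR u hu v (.inr huv)) he
    have hPQ : v ∈ P ↔ v ∉ Q := by
      have := hI.symm ▸ hvI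
      rw [Set.mem_symmDiff] at this
      tauto
    exact hS v hve hvI (hv.trans (not_iff_comm.1 hPQ.symm).symm)

theorem exists_complete_altPath (hG : G.Polarized P) (hH : H.Polarized Q)
    (hI : symmDiff P Q = I)
    (hcov : ∀ S : Set ℕ, (∃ e, G.relI I e X ∧ ∀ v ∈ e, v ∈ I → v ∈ S) ∨
      ∃ e, H.relI I e X ∧ ∀ v ∈ e, v ∈ I → v ∉ S) :
    ∃ n z, AltPath G H I X n z ∧ z 0 ∉ I ∧ z (n - 1) ∉ I := by
  obtain ⟨u, hu, v, hv, huv⟩ := exists_transGen_step hG hH hI hcov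
  obtain ⟨n, z, rfl, rfl, hstep, hinj⟩ := exists_injOn_chain huv.to_reflTransGen
  have mem_I : ∀ u v w, G.Step I X P u v ∨ H.Step I X Q u v →
      G.Step I X P v w ∨ H.Step I X Q v w → v ∈ I := by
    rw [← hI]
    rintro u v w (⟨-, -, hv⟩ | ⟨-, -, hv⟩) (⟨-, hv', -⟩ | ⟨-, hv', -⟩)
    · exact absurd hv hv'
    · exact .inl ⟨hv, hv'⟩
    · exact .inr ⟨hv, hv'⟩
    · exact absurd hv hv'
  have hn : n ≠ 0 := by
    rintro rfl
    obtain ⟨w, hw, -⟩ := Relation.TransGen.head'_iff.1 huv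
    obtain ⟨w', -, hw'⟩ := Relation.TransGen.tail'_iff.1 huv
    exact hu (mem_I w' _ w hw' hw)
  have halt := alternates_of_chain (n := n + 1) (z := z)
    (fun u v w (huv : G.Step I X P u v) (hvw : G.Step I X P v w) => hvw.2.1 huv.2.2)
    (fun u v w (huv : H.Step I X Q u v) (hvw : H.Step I X Q v w) => hvw.2.1 huv.2.2)
    fun i hi => hstep i (by lia)
  refine ⟨n + 1, z, ⟨by lia, fun i hi j hj => hinj (Nat.le_of_lt_succ hi) (Nat.le_of_lt_succ hj),
    fun i hi hin => ?_, ?_⟩, hu, hv⟩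
  · obtain ⟨k, rfl⟩ := Nat.exists_eq_add_of_le' hi
    exact mem_I _ _ _ (hstep k (by lia)) (hstep (k + 1) (by lia))
  · exact halt.imp (fun h => h.mono (fun _ _ => And.left) fun _ _ => And.left)
      fun h => h.mono (fun _ _ => And.left) fun _ _ => And.left

end Graphs

/-! ### Totality -/

section Total

variable {α : Type} {bar : α → α} {A B : NForm α} {Γ Δ : Finset (NForm α)} {G H : BLGraph}
  {e : Sym2 ℕ} {u v : ℕ} {a b : α}

theorem Total.exists_hasAtomS (hG : Total bar G Γ) (hbl : G.IsBL) (he : e ∈ G.Edges)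
    (hv : v ∈ e) : ∃ a, HasAtomS Γ v a :=
  mem_snames_iff.1 (hG.1 ▸ hbl.subset_verts he hv)

theorem Total.hasAtomS_bar (hG : Total bar G Γ) (hbl : G.IsBL) (he : s(u, v) ∈ G.Edges)
    (hu : HasAtomS Γ u a) : HasAtomS Γ v (bar a) := by
  obtain ⟨b, hv⟩ := hG.exists_hasAtomS hbl he (Sym2.mem_mk_right u v)
  exact hG.2.2 v u (Sym2.eq_swap ▸ he) b a hv hu ▸ hv

theorem Total.polarized (hG : Total bar G Γ) (hbl : G.IsBL) (hΓ : SFSet Γ) {pos : Set α}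
    (hpos : ∀ a, bar a ∈ pos ↔ a ∉ pos) : G.Polarized (positiveNames pos Γ) := by
  intro e he
  induction e with | _ u v
  obtain ⟨a, hu⟩ := hG.exists_hasAtomS hbl he (Sym2.mem_mk_left u v)
  have hv := hG.hasAtomS_bar hbl he hu
  by_cases ha : a ∈ pos
  · exact ⟨v, fun h => (hpos a).1 ((hv.mem_positiveNames hΓ).1 h) ha, u, ⟨a, ha, hu⟩,
      Sym2.eq_swap⟩
  · exact ⟨u, fun h => ha ((hu.mem_positiveNames hΓ).1 h), v, ⟨_, (hpos a).2 ha, hv⟩, rfl⟩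

theorem Total.eq_bar_of_edge (hG : Total bar G Γ) (hbl : G.IsBL) (hΔ : SFSet Δ)
    (hΓΔ : ∀ x a, HasAtomS Γ x a → HasAtomS Δ x a) (he : s(u, v) ∈ G.Edges)
    (hu : HasAtomS Δ u a) (hv : HasAtomS Δ v b) : a = bar b := by
  obtain ⟨c, hc⟩ := hG.exists_hasAtomS hbl he (Sym2.mem_mk_right u v)
  obtain rfl := (hΓΔ v c hc).unique hΔ hv
  exact hu.unique hΔ (hΓΔ u _ (hG.hasAtomS_bar hbl (Sym2.eq_swap ▸ he) hc))

theorem Total.union (hG : Total bar G Γ) (hH : Total bar H Γ) : Total bar (G.union H) Γ := by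
  refine ⟨?_, ?_, fun x y he => ?_⟩
  · exact (congrArg₂ _ hG.1 hH.1).trans (Set.union_self _)
  · rw [BLGraph.br_union, hG.2.1, hH.2.1, Set.union_self]
  · exact (BLGraph.edges_union ▸ he).elim (hG.2.2 x y) (hH.2.2 x y)

theorem Total.weaken (hG : Total bar G Δ) (hbl : G.IsBL) (hΔΓ : SFSet (Δ ∪ Γ))
    (hd : Disjoint (snames Δ) (snames Γ)) :
    Total bar (blwk (snames Γ) (BrS Γ) G) (Δ ∪ Γ) := by
  refine ⟨?_, ?_, ?_⟩
  · exact (congrArg (· ∪ snames Γ) hG.1).trans snames_union.symm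
  · ext X
    rw [mem_brS_union hd, ← hG.2.1]
    exact ⟨fun ⟨e, Y, Z, hY, hZ, hX⟩ => ⟨Y, ⟨e, hY⟩, Z, hZ, hX⟩,
      fun ⟨Y, ⟨e, hY⟩, Z, hZ, hX⟩ => ⟨e, Y, Z, hY, hZ, hX⟩⟩
  · rintro x y ⟨-, Y, -, hY, -⟩ a b
    exact hG.eq_bar_of_edge hbl hΔΓ (fun x a h => h.mono Finset.subset_union_left) ⟨Y, hY⟩

theorem Total.weaken_insert (hG : Total bar G Γ) (hbl : G.IsBL) (hA : A.sharingFree)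
    (hΓ : SFSet Γ) (hd : Disjoint A.names (snames Γ)) :
    Total bar (GS4.blwk A.names (BrF A) G) (insert A Γ) := by
  have hΓA : Γ ∪ {A} = insert A Γ := Finset.union_singleton A Γ
  have := hG.weaken (Γ := {A}) hbl (hΓA ▸ hΓ.insert hA hd) (by rw [snames_singleton]; exact hd.symm)
  rwa [hΓA, snames_singleton, brS_singleton] at this

theorem Total.or (hG : Total bar G (insert A (insert B Γ))) (hAB : Disjoint A.names B.names)
    (hA : Disjoint A.names (snames Γ)) (hB : Disjoint B.names (snames Γ)) :
    Total bar G (insert (.or A B) Γ) := by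
  obtain ⟨hverts, hbr, hdual⟩ := hG
  refine ⟨?_, hbr.trans (brS_insert_or hAB hA hB).symm, ?_⟩
  · rw [hverts, snames_insert, snames_insert, snames_insert, ← Set.union_assoc, NForm.names]
  · simpa only [hasAtomS_insert, HasAtom, or_assoc] using hdual

theorem Total.and (hG : Total bar G (insert A Γ)) (hblG : G.IsBL)
    (hH : Total bar H (insert B Γ)) (hblH : H.IsBL) (hΓ : SFSet (insert (.and A B) Γ))
    (hA : Disjoint A.names (snames Γ)) (hB : Disjoint B.names (snames Γ)) :
    Total bar (G.union H) (insert (.and A B) Γ) := by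
  refine ⟨?_, ?_, fun x y he a b => ?_⟩
  · rw [snames_insert, NForm.names, Set.union_union_distrib_right, ← snames_insert,
      ← snames_insert, ← hG.1, ← hH.1, BLGraph.union]
  · rw [BLGraph.br_union, hG.2.1, hH.2.1, brS_insert_and hA hB]
  · rcases BLGraph.edges_union ▸ he with he | he
    · refine hG.eq_bar_of_edge hblG hΓ (fun x a => ?_) he
      simp only [hasAtomS_insert, HasAtom]
      tauto
    · refine hH.eq_bar_of_edge hblH hΓ (fun x a => ?_) he
      simp only [hasAtomS_insert, HasAtom]
      tauto

end Total

/-! ### Identities -/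

section Identity

variable {α : Type} {bar : α → α} {A B C D : NForm α} {G H : BLGraph}

theorem isBL_blid (hd : Disjoint A.names C.names) : (blid A C).IsBL := by
  have subset_names (A : NForm α) : ∀ Z ∈ BrF A, Z ⊆ A.names := fun _ => subset_names_of_mem_brF
  fun_induction blid A C with
  | case1 x a y c =>
    rintro e X ⟨rfl, rfl⟩
    exact ⟨fun h => Set.disjoint_left.1 hd rfl h, subset_rfl, by simp⟩
  | case2 A₁ A₂ C₁ C₂ ih₁ ih₂ | case3 A₁ A₂ C₁ C₂ ih₁ ih₂ =>
    have hd₁ := hd.mono Set.subset_union_left Set.subset_union_left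
    have hd₂ := hd.mono Set.subset_union_right Set.subset_union_right
    exact ((ih₁ hd₁).blwk (subset_names _)).union ((ih₂ hd₂).blwk (subset_names _))
  | case4 => exact fun _ _ h => h.elim

theorem total_blid_atom (hbar : Function.Involutive bar) {x y : ℕ} {a c : α} (hxy : x ≠ y)
    (hac : a = bar c) :
    Total bar (blid (.atom x a) (.atom y c)) {.atom x a, .atom y c} := by
  refine ⟨?_, ?_, ?_⟩
  · rw [snames_insert, snames_singleton]
    rfl
  · ext X
    rw [mem_brS_insert (by rw [snames_singleton]; exact Set.disjoint_singleton.2 hxy),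
      brS_singleton]
    simp [BLGraph.Br, blid, BrF, Set.pair_comm]
  · rintro u v ⟨X, he, -⟩ a' c' hu hv
    simp only [HasAtomS, Finset.mem_insert, Finset.mem_singleton, exists_eq_or_imp, HasAtom,
      ↓existsAndEq, true_and] at hu hv
    grind [Sym2.eq_iff, hbar c]

theorem Total.or_and (hG : Total bar G {A, C}) (hblG : G.IsBL) (hH : Total bar H {B, D})
    (hblH : H.IsBL) (hAB : (NForm.or A B).sharingFree) (hCD : (NForm.and C D).sharingFree)
    (hd : Disjoint (NForm.or A B).names (NForm.and C D).names) :
    Total bar ((blwk B.names (BrF B) G).union (blwk A.names (BrF A) H))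
      {.and C D, .or A B} := by
  have ⟨hA, hB, hAB'⟩ := hAB
  have ⟨hC, hD, _⟩ := hCD
  obtain ⟨⟨hAC, hBC⟩, hAD, hBD⟩ : (Disjoint A.names C.names ∧ Disjoint B.names C.names) ∧
      Disjoint A.names D.names ∧ Disjoint B.names D.names := by
    simpa only [NForm.names, Set.disjoint_union_left, Set.disjoint_union_right] using hd
  have hG' : Total bar (blwk B.names (BrF B) G) {C, .or A B} := by
    have hABC := hG.weaken_insert hblG hB (sfSet_pair hA hC hAC)
      (by simp only [snames_pair, Set.disjoint_union_right, hAB'.symm, hBC, and_self])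
    rw [Finset.insert_comm] at hABC
    rw [Finset.pair_comm]
    exact hABC.or hAB' (by rwa [snames_singleton]) (by rwa [snames_singleton])
  have hH' : Total bar (blwk A.names (BrF A) H) {D, .or A B} := by
    have hABD := hH.weaken_insert hblH hA (sfSet_pair hB hD hBD)
      (by simp only [snames_pair, Set.disjoint_union_right, hAB', hAD, and_self])
    rw [Finset.pair_comm]
    exact hABD.or hAB' (by rwa [snames_singleton]) (by rwa [snames_singleton])
  refine hG'.and (hblG.blwk fun _ => subset_names_of_mem_brF) hH'
    (hblH.blwk fun _ => subset_names_of_mem_brF) (sfSet_pair hCD hAB hd.symm) ?_ ?_ <;>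
    rw [snames_singleton]
  · exact hd.symm.mono_left Set.subset_union_left
  · exact hd.symm.mono_left Set.subset_union_right

theorem total_blid (hbar : Function.Involutive bar) (hshape : A.shape = (negF bar C).shape)
    (hA : A.sharingFree) (hC : C.sharingFree) (hd : Disjoint A.names C.names) :
    Total bar (blid A C) {A, C} := by
  induction A generalizing C with
  | atom x a =>
    cases C with
    | atom y c => exact total_blid_atom hbar (Set.disjoint_singleton.1 hd) (Shape.atom.inj hshape)
    | or | and => cases hshape
  | or A₁ A₂ ih₁ ih₂ =>
    cases C with
    | and C₁ C₂ =>
      obtain ⟨h₁, h₂⟩ := Shape.or.inj hshape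
      have hd₁ := hd.mono Set.subset_union_left Set.subset_union_left
      have hd₂ := hd.mono Set.subset_union_right Set.subset_union_right
      rw [Finset.pair_comm]
      exact (ih₁ h₁ hA.1 hC.1 hd₁).or_and (isBL_blid hd₁) (ih₂ h₂ hA.2.1 hC.2.1 hd₂)
        (isBL_blid hd₂) hA hC hd
    | atom | or => cases hshape
  | and A₁ A₂ ih₁ ih₂ =>
    cases C with
    | or C₁ C₂ =>
      obtain ⟨h₁, h₂⟩ := Shape.and.inj hshape
      have hd₁ := hd.mono Set.subset_union_left Set.subset_union_left
      have hd₂ := hd.mono Set.subset_union_right Set.subset_union_right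
      have hG := Finset.pair_comm A₁ C₁ ▸ ih₁ h₁ hA.1 hC.1 hd₁
      have hH := Finset.pair_comm A₂ C₂ ▸ ih₂ h₂ hA.2.1 hC.2.1 hd₂
      exact hG.or_and (isBL_blid hd₁) hH (isBL_blid hd₂) hC hA hd.symm
    | atom | and => cases hshape

end Identity

/-! ### Cut -/

section Cut

variable {α : Type} {bar : α → α} {A : NForm α} {Γ Δ : Finset (NForm α)} {G H : BLGraph}
  {I X Y : Set ℕ} {n : ℕ} {z : ℕ → ℕ} {a : α}

theorem AltPath.hasAtomS_last (hz : AltPath G H I X n z) (h0 : z 0 ∉ I) (hlast : z (n - 1) ∉ I)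
    (hG : Total bar G Γ) (hblG : G.IsBL) (hH : Total bar H Δ) (hblH : H.IsBL)
    (hbar : Function.Involutive bar) (hΓΔ : DualOn bar I Γ Δ) (ha : HasAtomS Γ (z 0) a) :
    HasAtomS Γ (z (n - 1)) (bar a) := by
  have edgeG : ∀ u v, HasAtomS Γ u a → G.relI I s(u, v) X → HasAtomS Γ v (bar a) :=
    fun u v hu huv => hG.hasAtomS_bar hblG huv.mem_edges hu
  have edgeH : ∀ u v, HasAtomS Δ u a → H.relI I s(u, v) X → HasAtomS Δ v (bar a) :=
    fun u v hu huv => hH.hasAtomS_bar hblH huv.mem_edges hu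
  have crossG : ∀ u v, HasAtomS Γ u a → G.relI I s(u, v) X → v ∈ I → HasAtomS Δ v a :=
    fun u v hu huv hv => hbar a ▸ (hΓΔ.dual v hv _).2 (edgeG u v hu huv)
  have crossH : ∀ u v, HasAtomS Δ u a → H.relI I s(u, v) X → v ∈ I → HasAtomS Γ v a :=
    fun u v hu huv hv => (hΓΔ.dual v hv a).1 (edgeH u v hu huv)
  have last_edge : ∃ u, HasAtomS Γ u a ∧ G.relI I s(u, z (n - 1)) X ∨
      HasAtomS Δ u a ∧ H.relI I s(u, z (n - 1)) X := by
    rcases hz.alternates with halt | halt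
    · exact halt.last_step hz.1 hz.2.2.1 crossG crossH ha
    · exact (halt.last_step hz.1 hz.2.2.1 crossH crossG ((hΓΔ.agree _ h0 a).2 ha)).imp
        fun _ => Or.symm
  obtain ⟨u, ⟨hu, huv⟩ | ⟨hu, huv⟩⟩ := last_edge
  · exact edgeG u _ hu huv
  · exact (hΓΔ.agree _ hlast _).1 (edgeH u _ hu huv)

theorem Total.mem_brS_of_relI {e : Sym2 ℕ} (hG : Total bar G (insert A Γ))
    (hd : Disjoint A.names (snames Γ)) (h : G.relI A.names e X) : X ∈ BrS Γ := by
  obtain ⟨Y, hY, rfl⟩ := h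
  exact diff_names_mem_brS hd (hG.2.1 ▸ ⟨e, hY⟩)

theorem Total.exists_relI (hG : Total bar G (insert A Γ)) (hblG : G.IsBL)
    (hd : Disjoint A.names (snames Γ)) (hY : Y ∈ BrF A) (hX : X ∈ BrS Γ) :
    ∃ e, G.relI A.names e X ∧ ∀ v ∈ e, v ∈ A.names → v ∈ Y := by
  obtain ⟨e, he⟩ : Y ∪ X ∈ G.Br := hG.2.1 ▸ (mem_brS_insert hd).2 ⟨Y, hY, X, hX, rfl⟩
  have hXA : Disjoint X A.names := hd.symm.mono_left hX.1
  refine ⟨e, ⟨_, he, ?_⟩, fun v hv hvA => ?_⟩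
  · rw [Set.union_sdiff_distrib, Set.sdiff_eq_empty.2 (subset_names_of_mem_brF hY),
      Set.empty_union, hXA.sdiff_eq_left]
  · exact ((hblG e _ he).2.2 v hv).resolve_right fun hvX => Set.disjoint_left.1 hXA hvX hvA

theorem Total.br_comp_subset (hG : Total bar G (insert A Γ))
    (hH : Total bar H (insert (negF bar A) Γ)) (hd : Disjoint A.names (snames Γ)) :
    (G.comp H A.names).Br ⊆ BrS Γ := by
  rintro X ⟨_, n, z, hz, -⟩
  rcases hz.relI (i := 0) hz.1 with h | h
  · exact hG.mem_brS_of_relI hd h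
  · exact hH.mem_brS_of_relI (by rwa [names_negF]) (by rwa [names_negF])

theorem Total.brS_subset_br_comp (hG : Total bar G (insert A Γ)) (hblG : G.IsBL)
    (hH : Total bar H (insert (negF bar A) Γ)) (hblH : H.IsBL)
    (hbar : Function.Involutive bar) (hfix : ∀ a, bar a ≠ a) (hA : A.sharingFree)
    (hΓ : SFSet Γ) (hd : Disjoint A.names (snames Γ)) : BrS Γ ⊆ (G.comp H A.names).Br := by
  intro X hX
  have hd' : Disjoint (negF bar A).names (snames Γ) := by rwa [names_negF]
  have hΓA : SFSet (insert A Γ) := hΓ.insert hA hd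
  have hΓnA : SFSet (insert (negF bar A) Γ) := hΓ.insert hA.negF hd'
  obtain ⟨pos, hpos⟩ := exists_polarity hbar hfix
  have hAΓ : A.names ⊆ snames (insert A Γ) := names_subset_snames (Finset.mem_insert_self A Γ)
  have hI := (dualOn_insert_negF hbar.injective hd).symmDiff_positiveNames hΓA hΓnA hAΓ hpos
  have hcov : ∀ S : Set ℕ, (∃ e, G.relI A.names e X ∧ ∀ v ∈ e, v ∈ A.names → v ∈ S) ∨
      ∃ e, H.relI A.names e X ∧ ∀ v ∈ e, v ∈ A.names → v ∉ S := by
    intro S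
    rcases exists_branch_subset_or_compl bar A S with ⟨Y, hY, hYS⟩ | ⟨Y, hY, hYS⟩
    · obtain ⟨e, he, heY⟩ := hG.exists_relI hblG hd hY hX
      exact .inl ⟨e, he, fun v hv hvA => hYS (heY v hv hvA)⟩
    · obtain ⟨e, he, heY⟩ := hH.exists_relI hblH hd' hY hX
      rw [names_negF] at he heY
      exact .inr ⟨e, he, fun v hv hvA => hYS (heY v hv hvA)⟩
  obtain ⟨n, z, hz, h0, hlast⟩ := exists_complete_altPath (X := X)
    (hG.polarized hblG hΓA hpos) (hH.polarized hblH hΓnA hpos) hI hcov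
  exact ⟨_, n, z, hz, h0, hlast, rfl⟩

theorem Total.comp (hG : Total bar G (insert A Γ)) (hblG : G.IsBL)
    (hH : Total bar H (insert (negF bar A) Γ)) (hblH : H.IsBL)
    (hbar : Function.Involutive bar) (hfix : ∀ a, bar a ≠ a) (hA : A.sharingFree)
    (hΓ : SFSet Γ) (hd : Disjoint A.names (snames Γ)) : Total bar (G.comp H A.names) Γ := by
  refine ⟨?_, ?_, ?_⟩
  · simp only [BLGraph.comp, hG.1, hH.1, snames_insert, names_negF, Set.union_self,
      Set.union_sdiff_left, hd.symm.sdiff_eq_left]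
  · exact (hG.br_comp_subset hH hd).antisymm
      (hG.brS_subset_br_comp hblG hH hblH hbar hfix hA hΓ hd)
  · rintro x y ⟨X, n, z, hz, h0, hlast, hxy⟩ a b ha hb
    have hΓA : SFSet (insert A Γ) := hΓ.insert hA hd
    have last_dual : ∀ c, HasAtomS (insert A Γ) (z 0) c →
        HasAtomS (insert A Γ) (z (n - 1)) (bar c) := fun c =>
      hz.hasAtomS_last h0 hlast hG hblG hH hblH hbar (dualOn_insert_negF hbar.injective hd)
    replace ha := ha.mono (Finset.subset_insert A Γ)
    replace hb := hb.mono (Finset.subset_insert A Γ)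
    rcases Sym2.eq_iff.1 hxy with ⟨rfl, rfl⟩ | ⟨rfl, rfl⟩
    · exact hbar.eq_iff.1 ((last_dual a ha).unique hΓA hb)
    · exact ha.unique hΓA (last_dual b hb)

end Cut

/-! ### Derivations -/

section Derivations

variable {α : Type} {bar : α → α} {A B : NForm α} {Γ : Finset (NForm α)} {P Q : Deriv α}

theorem concl_cut (hP : concl P = insert A Γ) (hA : A ∉ Γ) : concl (.cut A P Q) = Γ := by
  rw [concl, hP, Finset.erase_insert hA]

theorem concl_orI (hP : concl P = insert A (insert B Γ)) (hA : A ∉ Γ) (hB : B ∉ Γ)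
    (hAB : A ≠ B) : concl (.orI A B P) = insert (.or A B) Γ := by
  rw [concl, hP, Finset.erase_insert (by simp [hA, hAB]), Finset.erase_insert hB]

theorem concl_andI (hP : concl P = insert A Γ) (hA : A ∉ Γ) :
    concl (.andI A B P Q) = insert (.and A B) Γ := by
  rw [concl, hP, Finset.erase_insert hA]

theorem total_ax {C : NForm α} (hbar : Function.Involutive bar) (hP : WF bar (.ax Γ A C)) :
    Total bar (blaxg (.ax Γ A C)) (concl (.ax Γ A C)) := by
  obtain ⟨hshape, hA, hC, hΓ, hd, hAΓ, hCΓ⟩ := hP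
  have hconcl : concl (.ax Γ A C) = {A, C} ∪ Γ := by
    rw [concl, Finset.insert_union, Finset.singleton_union]
  have hSF : SFSet (concl (.ax Γ A C)) := (hΓ.insert hC hCΓ).insert hA <| by
    rw [snames_insert]
    exact Set.disjoint_union_right.2 ⟨hd, hAΓ⟩
  rw [hconcl] at hSF ⊢
  refine (total_blid hbar hshape hA hC hd).weaken (isBL_blid hd) hSF ?_
  rw [snames_pair]
  exact Set.disjoint_union_left.2 ⟨hAΓ, hCΓ⟩

theorem isBL_blaxg (hP : WF bar P) : (blaxg P).IsBL := by
  induction P with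
  | ax Γ A C => exact (isBL_blid hP.2.2.2.2.1).blwk fun _ => And.left
  | cut A P Q ihP ihQ => exact (ihP hP.1).comp (ihQ hP.2.1)
  | sup P Q ihP ihQ => exact (ihP hP.1).union (ihQ hP.2.1)
  | orI A B P ihP => exact ihP hP.1
  | andI A B P Q ihP ihQ => exact (ihP hP.1).union (ihQ hP.2.1)

end Derivations

end GS4

/-- Desequentialization: the branch-labeled axiom graph of a
derivation is total w.r.t. its conclusion. -/
theorem GS4.desequentialization {α : Type} (bar : α → α)
    (hbar : Function.Involutive bar) (hfix : ∀ a, bar a ≠ a)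
    (P : GS4.Deriv α) (hP : GS4.WF bar P) :
    GS4.Total bar (GS4.blaxg P) (GS4.concl P) := by
  induction P with
  | ax Γ A C => exact GS4.total_ax hbar hP
  | cut A P Q ihP ihQ =>
    obtain ⟨hP, hQ, Γ, hAΓ, -, hcP, hcQ, hA, hΓ, hd⟩ := hP
    rw [GS4.concl_cut hcP hAΓ]
    exact (hcP ▸ ihP hP).comp (GS4.isBL_blaxg hP) (hcQ ▸ ihQ hQ) (GS4.isBL_blaxg hQ) hbar hfix
      hA hΓ hd
  | sup P Q ihP ihQ =>
    obtain ⟨hP, hQ, hPQ⟩ := hP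
    exact (ihP hP).union (hPQ ▸ ihQ hQ)
  | orI A B P ihP =>
    obtain ⟨hP, Γ, hAΓ, hBΓ, hne, hcP, -, -, -, hAB, hA, hB⟩ := hP
    rw [GS4.concl_orI hcP hAΓ hBΓ hne]
    exact (hcP ▸ ihP hP).or hAB hA hB
  | andI A B P Q ihP ihQ =>
    obtain ⟨hP, hQ, Γ, hAΓ, -, hcP, hcQ, hA, hB, hΓ, hAB, hAΓ', hBΓ'⟩ := hP
    rw [GS4.concl_andI hcP hAΓ]
    exact (hcP ▸ ihP hP).and (GS4.isBL_blaxg hP) (hcQ ▸ ihQ hQ) (GS4.isBL_blaxg hQ)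
      (hΓ.insert ⟨hA, hB, hAB⟩ (Set.disjoint_union_left.2 ⟨hAΓ', hBΓ'⟩)) hAΓ' hBΓ'
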